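/- Continuum terminated fixed point. Let ω be a regular averaging kernel and let (hf, hg) ∈ 𝒳² be such that hg is continuous at 0 and Φ(hf, hg; ·, ·) is uniquely minimized over [0,1]² at (1,1) (hence A(hf, hg) < 0). Then there exist (0,1)-interpolating F, G ∈ Ψ forming a fixed point of the one-sided termination of the continuum spatially coupled recursion: F(x) = 0 for x < 0, F(x) = hf((G ⊗ ω)(x)) for x > 0, and G(x) = hg((F ⊗ ω)(x)) for all x ∈ ℝ. -/

import Mathlib

open MeasureTheory Filter Set

noncomputable section

/-- Convolution `(f ⊗ ω)(x) = ∫ y, f y · ω (x − y)`. -/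
def conv (f ω : ℝ → ℝ) (x : ℝ) : ℝ := ∫ y : ℝ, f y * ω (x - y)

/-- `ω` is an averaging kernel: even, nonnegative, of bounded variation, integrating to 1. -/
def IsAveragingKernel (ω : ℝ → ℝ) : Prop :=
  (∀ x, ω (-x) = ω x) ∧ (∀ x, 0 ≤ ω x) ∧ BoundedVariationOn ω Set.univ ∧
    MeasureTheory.Integrable ω ∧ (∫ x : ℝ, ω x) = 1

/-- The essential supremum `‖ω‖∞` of a kernel, as a real number. -/
def kerSup (ω : ℝ → ℝ) : ℝ := (eLpNorm ω ⊤ MeasureTheory.volume).toReal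

/-- `ω` is regular: for some `W ∈ (0,∞]`, it vanishes outside `[−W, W]` and is
positive on `(−W, W)` (the case `W = ∞` being that `ω` is everywhere positive). -/
def IsRegularKernel (ω : ℝ → ℝ) : Prop :=
  (∀ x, 0 < ω x) ∨
    ∃ W : ℝ, 0 < W ∧ (∀ x, W < |x| → ω x = 0) ∧ (∀ x, |x| < W → 0 < ω x)

/-- Membership in `𝒳`: nondecreasing self-maps of `[0,1]`. -/
def MemX (h : ℝ → ℝ) : Prop :=
  MonotoneOn h (Icc 0 1) ∧ MapsTo h (Icc 0 1) (Icc 0 1)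

/-- Left limit `h(u−)` of `h ∈ 𝒳` at `u ∈ [0,1]`, with the convention `h(0−) = 0`. -/
def lm (h : ℝ → ℝ) (u : ℝ) : ℝ := if u ≤ 0 then 0 else sSup (h '' Ico 0 u)

/-- Right limit `h(u+)` of `h ∈ 𝒳` at `u ∈ [0,1]`, with the convention `h(1+) = 1`. -/
def rm (h : ℝ → ℝ) (u : ℝ) : ℝ := if 1 ≤ u then 1 else sInf (h '' Ioc u 1)

/-- A canonical generalized inverse of `h ∈ 𝒳` (any valid inverse has the same integrals,
so the potential below is unambiguous). -/
def Xinv (h : ℝ → ℝ) (v : ℝ) : ℝ := sInf ({1} ∪ {u ∈ Icc (0:ℝ) 1 | v ≤ h u})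

/-- The potential `Φ(hf, hg; u, v) = ∫₀ᵘ hg⁻¹ + ∫₀ᵛ hf⁻¹ − u·v`. -/
def Pot (hf hg : ℝ → ℝ) (u v : ℝ) : ℝ :=
  (∫ x in (0:ℝ)..u, Xinv hg x) + (∫ x in (0:ℝ)..v, Xinv hf x) - u * v

/-- `A(hf, hg) = Φ(hf, hg; 1, 1)`. -/
def Agap (hf hg : ℝ → ℝ) : ℝ := Pot hf hg 1 1

/-- `(u,v)` is a crossing point of `(hf, hg)`:
`u ∈ [hg(v−), hg(v+)]` and `v ∈ [hf(u−), hf(u+)]`. -/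
def IsCrossing (hf hg : ℝ → ℝ) (u v : ℝ) : Prop :=
  u ∈ Icc (0:ℝ) 1 ∧ v ∈ Icc (0:ℝ) 1 ∧
    u ∈ Icc (lm hg v) (rm hg v) ∧ v ∈ Icc (lm hf u) (rm hf u)

/-- The strictly positive gap condition: there is a nontrivial crossing point, and every
nontrivial crossing point satisfies `Φ(hf, hg; u, v) > max {0, A(hf, hg)}`. -/
def StrictPosGap (hf hg : ℝ → ℝ) : Prop :=
  (∃ u v, IsCrossing hf hg u v ∧ ¬(u = 0 ∧ v = 0) ∧ ¬(u = 1 ∧ v = 1)) ∧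
    ∀ u v, IsCrossing hf hg u v → ¬(u = 0 ∧ v = 0) → ¬(u = 1 ∧ v = 1) →
      max 0 (Agap hf hg) < Pot hf hg u v

/-- Membership in `Ψ`: nondecreasing functions `ℝ → [0,1]`. -/
def MemPsi (f : ℝ → ℝ) : Prop := Monotone f ∧ ∀ x, f x ∈ Icc (0:ℝ) 1

/-- `f` is `(a,b)`-interpolating: limits `a` at `−∞` and `b` at `+∞`. -/
def Interpolates (f : ℝ → ℝ) (a b : ℝ) : Prop :=
  Filter.Tendsto f Filter.atBot (nhds a) ∧ Filter.Tendsto f Filter.atTop (nhds b)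

def he (h : ℝ → ℝ) (u : ℝ) : ℝ := if u < 0 then 0 else h (min u 1)

lemma he_mem {h : ℝ → ℝ} (hh : MemX h) (u : ℝ) : he h u ∈ Icc (0:ℝ) 1 := by
  unfold he
  split_ifs with h0
  · simp
  · exact hh.2 ⟨le_min (not_lt.1 h0) zero_le_one, min_le_right _ _⟩

lemma he_mono {h : ℝ → ℝ} (hh : MemX h) : Monotone (he h) := by
  intro a b hab
  by_cases ha : a < 0
  · have : he h a = 0 := by simp [he, ha]
    rw [this]; exact (he_mem hh b).1
  · have hb : ¬ b < 0 := by push Not at *; linarith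
    simp only [he, ha, hb, if_false]
    push Not at ha hb
    exact hh.1 ⟨le_min ha zero_le_one, min_le_right _ _⟩
      ⟨le_min hb zero_le_one, min_le_right _ _⟩ (min_le_min_right _ hab)

lemma he_eq (h : ℝ → ℝ) {u : ℝ} (hu : u ∈ Icc (0:ℝ) 1) : he h u = h u := by
  simp [he, not_lt.2 hu.1, min_eq_left hu.2]

lemma Xinv_bdd (h : ℝ → ℝ) (v : ℝ) : ∀ u ∈ ({1} ∪ {u ∈ Icc (0:ℝ) 1 | v ≤ h u} : Set ℝ), 0 ≤ u := by
  rintro u (hu | hu)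
  · rw [mem_singleton_iff.1 hu]; norm_num
  · exact hu.1.1

lemma Xinv_nonneg (h : ℝ → ℝ) (v : ℝ) : 0 ≤ Xinv h v :=
  le_csInf ⟨1, Or.inl rfl⟩ (Xinv_bdd h v)

lemma Xinv_mono (h : ℝ → ℝ) : Monotone (Xinv h) := by
  intro a b hab
  refine csInf_le_csInf ⟨0, fun u hu => Xinv_bdd h a u hu⟩ ⟨1, Or.inl rfl⟩ ?_
  rintro u (hu | hu)
  · exact Or.inl hu
  · exact Or.inr ⟨hu.1, hab.trans hu.2⟩

lemma Xinv_ii (h : ℝ → ℝ) (a b : ℝ) : IntervalIntegrable (Xinv h) volume a b :=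
  (Xinv_mono h).intervalIntegrable

def Jp (h : ℝ → ℝ) (v : ℝ) : ℝ := ∫ x in (0:ℝ)..v, Xinv h x

lemma Jp_cont (h : ℝ → ℝ) : Continuous (Jp h) :=
  intervalIntegral.continuous_primitive (fun a b => Xinv_ii h a b) 0

lemma Jp_sub (h : ℝ → ℝ) (a b : ℝ) : Jp h b - Jp h a = ∫ x in a..b, Xinv h x :=
  intervalIntegral.integral_interval_sub_left (Xinv_ii h _ _) (Xinv_ii h _ _)

lemma fenchel {h : ℝ → ℝ} (hh : MemX h) {c m v : ℝ} (hc : c ≤ 1) (hm : m ∈ Icc (0:ℝ) 1)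
    (hv : v ∈ Icc (0:ℝ) m) :
    Jp h (min m (he h c)) - min m (he h c) * c ≤ Jp h v - v * c := by
  set w := min m (he h c) with hw
  have hhe := he_mem hh c
  have hw0 : 0 ≤ w := le_min hm.1 hhe.1
  rcases le_total w v with hwv | hvw
  · have h1 : ∫ x in w..v, c ≤ ∫ x in w..v, Xinv h x := by
      apply intervalIntegral.integral_mono_on_of_le_Ioo hwv (by simp) (Xinv_ii h _ _)
      intro s hs
      have hsw : he h c < s := by
        by_contra hcon
        push Not at hcon
        have : s ≤ w := le_min (hs.2.le.trans hv.2) hcon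
        linarith [hs.1]
      show c ≤ sInf _
      refine le_csInf ⟨1, Or.inl rfl⟩ ?_
      rintro u (hu | hu)
      · rw [mem_singleton_iff.1 hu]; exact hc
      · by_contra hcu
        push Not at hcu
        have := he_mono hh hcu.le
        rw [he_eq h hu.1] at this
        linarith [hu.2]
    rw [intervalIntegral.integral_const, ← Jp_sub, smul_eq_mul] at h1
    nlinarith
  · by_cases hc0 : c < 0
    · have : he h c = 0 := by simp [he, hc0]
      have hw' : w = 0 := by rw [hw, this]; exact min_eq_right hm.1
      have : v = w := le_antisymm hvw (by rw [hw']; exact hv.1)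
      rw [this]
    · push Not at hc0
      have h1 : ∫ x in v..w, Xinv h x ≤ ∫ x in v..w, c := by
        apply intervalIntegral.integral_mono_on_of_le_Ioo hvw (Xinv_ii h _ _) (by simp)
        intro s hs
        refine csInf_le ⟨0, fun u hu => Xinv_bdd h s u hu⟩ (Or.inr ⟨⟨hc0, hc⟩, ?_⟩)
        rw [← he_eq h ⟨hc0, hc⟩]
        exact hs.2.le.trans (min_le_right _ _)
      rw [intervalIntegral.integral_const, ← Jp_sub, smul_eq_mul] at h1
      nlinarith

def PP (p : ℤ → ℝ) (N : ℕ) (X : ℤ → ℝ) (i : ℤ) : ℝ :=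
  ∑ k ∈ Finset.Icc (-(N:ℤ)) N, p k * X (i - k)

def Upd (h : ℝ → ℝ) (p : ℤ → ℝ) (N : ℕ) (η m : ℝ) (L : ℕ) (X : ℤ → ℝ) (i : ℤ) : ℝ :=
  if i < 0 then 0 else if i < L then min m (he h (PP p N X i - η)) else m

/-- symmetric probability weights with range `N` -/
structure Wt (p : ℤ → ℝ) (N : ℕ) : Prop where
  nn : ∀ k, 0 ≤ p k
  ev : ∀ k, p (-k) = p k
  sp : ∀ k, k ∉ Finset.Icc (-(N:ℤ)) N → p k = 0
  one : ∑ k ∈ Finset.Icc (-(N:ℤ)) N, p k = 1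

lemma PP_mono {p : ℤ → ℝ} {N : ℕ} (hp : Wt p N) {X Y : ℤ → ℝ} (hXY : X ≤ Y) (i : ℤ) :
    PP p N X i ≤ PP p N Y i :=
  Finset.sum_le_sum fun k _ => mul_le_mul_of_nonneg_left (hXY _) (hp.nn k)

lemma PP_mono_i {p : ℤ → ℝ} {N : ℕ} (hp : Wt p N) {X : ℤ → ℝ} (hX : Monotone X) :
    Monotone (PP p N X) := fun i j hij =>
  Finset.sum_le_sum fun k _ => mul_le_mul_of_nonneg_left (hX (by omega)) (hp.nn k)

lemma PP_le_one {p : ℤ → ℝ} {N : ℕ} (hp : Wt p N) {X : ℤ → ℝ} (hX : ∀ i, X i ≤ 1) (i : ℤ) :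
    PP p N X i ≤ 1 := by
  rw [← hp.one]
  exact Finset.sum_le_sum fun k _ => by nlinarith [hp.nn k, hX (i - k)]

section upd
variable {h : ℝ → ℝ} {p : ℤ → ℝ} {N : ℕ} {η m : ℝ}

lemma Upd_mem (hh : MemX h) (hm : m ∈ Icc (0:ℝ) 1) (L : ℕ) (X : ℤ → ℝ) (i : ℤ) :
    Upd h p N η m L X i ∈ Icc 0 m := by
  unfold Upd
  split_ifs
  · exact ⟨le_rfl, hm.1⟩
  · exact ⟨le_min hm.1 (he_mem hh _).1, min_le_left _ _⟩
  · exact ⟨hm.1, le_rfl⟩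

lemma Upd_neg (L : ℕ) (X : ℤ → ℝ) {i : ℤ} (hi : i < 0) : Upd h p N η m L X i = 0 := by
  simp [Upd, hi]

lemma Upd_top (L : ℕ) (X : ℤ → ℝ) {i : ℤ} (hi : (L:ℤ) ≤ i) : Upd h p N η m L X i = m := by
  have h1 : ¬ i < 0 := by omega
  have h2 : ¬ i < L := by omega
  simp [Upd, h1, h2]

lemma Upd_mid (L : ℕ) (X : ℤ → ℝ) {i : ℤ} (h1 : 0 ≤ i) (h2 : i < L) :
    Upd h p N η m L X i = min m (he h (PP p N X i - η)) := by
  simp [Upd, not_lt.2 h1, h2]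

lemma Upd_mono (hp : Wt p N) (hh : MemX h) (L : ℕ) {X Y : ℤ → ℝ} (hXY : X ≤ Y) :
    Upd h p N η m L X ≤ Upd h p N η m L Y := by
  intro i
  unfold Upd
  split_ifs
  · exact le_rfl
  · exact min_le_min_left _ (he_mono hh (by linarith [PP_mono hp hXY i]))
  · exact le_rfl

lemma Upd_anti (hh : MemX h) (hm : m ∈ Icc (0:ℝ) 1) {L L' : ℕ} (hL : L ≤ L') (X : ℤ → ℝ) :
    Upd h p N η m L' X ≤ Upd h p N η m L X := by
  intro i
  by_cases hi : (L:ℤ) ≤ i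
  · rw [Upd_top L X hi]; exact (Upd_mem hh hm _ _ _).2
  · have h2 : i < L' := by omega
    push Not at hi
    simp [Upd, h2, hi]

lemma Upd_mono_i (hp : Wt p N) (hh : MemX h) (hm : m ∈ Icc (0:ℝ) 1) (L : ℕ) {X : ℤ → ℝ}
    (hX : Monotone X) : Monotone (Upd h p N η m L X) := by
  intro i j hij
  by_cases hi : i < 0
  · rw [Upd_neg L X hi]; exact (Upd_mem hh hm _ _ _).1
  by_cases hj : (L:ℤ) ≤ j
  · rw [Upd_top L X hj]; exact (Upd_mem hh hm _ _ _).2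
  rw [Upd_mid L X (by omega) (by omega), Upd_mid L X (by omega) (by omega)]
  exact min_le_min_left _ (he_mono hh (by linarith [PP_mono_i hp hX hij]))

lemma PP_eq (hp : Wt p N) {X : ℤ → ℝ} (hX : ∀ i < 0, X i = 0) (L : ℕ) {i : ℤ}
    (h2 : i < L) :
    ∑ j ∈ Finset.Ico (0:ℤ) (L + N), p (i - j) * X j = PP p N X i := by
  have e1 : PP p N X i = ∑ j ∈ Finset.Icc (i - N) (i + N), p (i - j) * X j := by
    unfold PP
    refine Finset.sum_nbij' (fun k => i - k) (fun j => i - j) ?_ ?_ ?_ ?_ ?_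
    · intro k hk; simp only [Finset.mem_Icc] at *; omega
    · intro k hk; simp only [Finset.mem_Icc] at *; omega
    · intro k hk; simp
    · intro k hk; simp
    · intro k hk; simp
  rw [e1]
  have e2 : ∑ j ∈ Finset.Ico (0:ℤ) (L + N), p (i - j) * X j
      = ∑ j ∈ Finset.Ico (0:ℤ) (L + N) ∪ Finset.Icc (i - N) (i + N), p (i - j) * X j := by
    apply Finset.sum_subset Finset.subset_union_left
    intro j hj hj'
    rcases lt_or_ge j 0 with h0 | h0
    · rw [hX j h0, mul_zero]
    · simp only [Finset.mem_union, Finset.mem_Ico, Finset.mem_Icc] at hj hj'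
      omega
  have e3 : ∑ j ∈ Finset.Icc (i - N) (i + N), p (i - j) * X j
      = ∑ j ∈ Finset.Ico (0:ℤ) (L + N) ∪ Finset.Icc (i - N) (i + N), p (i - j) * X j := by
    apply Finset.sum_subset Finset.subset_union_right
    intro j hj hj'
    rw [hp.sp, zero_mul]
    simp only [Finset.mem_Icc] at hj' ⊢
    omega
  rw [e2, e3]

lemma energy_step (hp : Wt p N) (hh : MemX h) (hη : 0 ≤ η) (hm : m ∈ Icc (0:ℝ) 1) (L : ℕ)
    {X Y : ℤ → ℝ} (hX : ∀ i < 0, X i = 0) (hX1 : ∀ i, X i ≤ 1)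
    (hY : ∀ i, Y i ∈ Icc 0 m) (hYL : ∀ i, (L:ℤ) ≤ i → Y i = m) :
    (∑ i ∈ Finset.Ico (0:ℤ) (L + N), (Jp h (Upd h p N η m L X i) + η * Upd h p N η m L X i))
      - ∑ i ∈ Finset.Ico (0:ℤ) (L + N), ∑ j ∈ Finset.Ico (0:ℤ) (L + N),
          Upd h p N η m L X i * p (i - j) * X j
    ≤ (∑ i ∈ Finset.Ico (0:ℤ) (L + N), (Jp h (Y i) + η * Y i))
      - ∑ i ∈ Finset.Ico (0:ℤ) (L + N), ∑ j ∈ Finset.Ico (0:ℤ) (L + N),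
          Y i * p (i - j) * X j := by
  rw [← Finset.sum_sub_distrib, ← Finset.sum_sub_distrib]
  apply Finset.sum_le_sum
  intro i hi
  rw [Finset.mem_Ico] at hi
  simp only [mul_assoc]
  rw [← Finset.mul_sum, ← Finset.mul_sum]
  by_cases hiL : i < L
  · rw [PP_eq hp hX L hiL, Upd_mid L X hi.1 hiL]
    have := fenchel hh (c := PP p N X i - η) (by linarith [PP_le_one hp hX1 i]) hm (hY i)
    nlinarith
  · push Not at hiL
    rw [Upd_top L X hiL, hYL i hiL]

end upd

lemma rowsum_le {p : ℤ → ℝ} {N : ℕ} (hp : Wt p N) (S : Finset ℤ) (i : ℤ) :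
    ∑ j ∈ S, p (i - j) ≤ 1 := by
  have e1 : ∑ j ∈ S, p (i - j) = ∑ k ∈ S.image (fun j => i - j), p k := by
    rw [Finset.sum_image]
    intro a _ b _ hab
    simpa using hab
  rw [e1, ← hp.one]
  have e2 : ∑ k ∈ Finset.Icc (-(N:ℤ)) N, p k =
      ∑ k ∈ Finset.Icc (-(N:ℤ)) N ∪ S.image (fun j => i - j), p k := by
    apply Finset.sum_subset Finset.subset_union_left
    intro k _ hk
    exact hp.sp k hk
  rw [e2]
  exact Finset.sum_le_sum_of_subset_of_nonneg Finset.subset_union_right fun k _ _ => hp.nn k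

lemma comono {p : ℤ → ℝ} {N : ℕ} (hp : Wt p N) (S : Finset ℤ) {X Y : ℤ → ℝ}
    (hX : Monotone X) (hY : Monotone Y) (hX0 : ∀ i, 0 ≤ X i) (hY0 : ∀ i, 0 ≤ Y i) :
    ∑ i ∈ S, ∑ j ∈ S, X i * p (i - j) * Y j ≤ ∑ i ∈ S, X i * Y i := by
  have hsym : ∀ i j, p (i - j) = p (j - i) := fun i j => by rw [← hp.ev, neg_sub]
  have h1 : ∑ i ∈ S, ∑ j ∈ S, X i * p (i - j) * Y j
      = ∑ i ∈ S, ∑ j ∈ S, X j * p (i - j) * Y i := by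
    rw [Finset.sum_comm]
    exact Finset.sum_congr rfl fun i _ => Finset.sum_congr rfl fun j _ => by rw [hsym]
  have h2 : ∑ i ∈ S, ∑ j ∈ S, p (i - j) * (X j * Y j) = ∑ i ∈ S, ∑ j ∈ S, p (i - j) * (X i * Y i) := by
    rw [Finset.sum_comm]
    exact Finset.sum_congr rfl fun i _ => Finset.sum_congr rfl fun j _ => by rw [hsym]
  have h3 : ∑ i ∈ S, ∑ j ∈ S, p (i - j) * (X i * Y i) ≤ ∑ i ∈ S, X i * Y i := by
    apply Finset.sum_le_sum
    intro i _
    rw [← Finset.sum_mul]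
    have := rowsum_le hp S i
    have := mul_nonneg (hX0 i) (hY0 i)
    nlinarith
  have h4 : ∑ i ∈ S, ∑ j ∈ S, X i * p (i - j) * Y j + ∑ i ∈ S, ∑ j ∈ S, X j * p (i - j) * Y i
      ≤ ∑ i ∈ S, ∑ j ∈ S, p (i - j) * (X j * Y j) + ∑ i ∈ S, ∑ j ∈ S, p (i - j) * (X i * Y i) := by
    simp only [← Finset.sum_add_distrib]
    apply Finset.sum_le_sum; intro i _
    apply Finset.sum_le_sum; intro j _
    have hk : 0 ≤ (X i - X j) * (Y i - Y j) := by
      rcases le_total i j with hij | hij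
      · exact mul_nonneg_of_nonpos_of_nonpos (by linarith [hX hij]) (by linarith [hY hij])
      · exact mul_nonneg (by linarith [hX hij]) (by linarith [hY hij])
    nlinarith [mul_nonneg (hp.nn (i - j)) hk]
  linarith

lemma dsum_ge {p : ℤ → ℝ} {N : ℕ} (hp : Wt p N) (L : ℕ) :
    (L:ℝ) - N ≤ ∑ i ∈ Finset.Ico (0:ℤ) (L + N), ∑ j ∈ Finset.Ico (0:ℤ) (L + N), p (i - j) := by
  have h1 : ∑ i ∈ Finset.Ico (N:ℤ) L, (1:ℝ) ≤
      ∑ i ∈ Finset.Ico (N:ℤ) L, ∑ j ∈ Finset.Ico (0:ℤ) (L + N), p (i - j) := by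
    apply Finset.sum_le_sum
    intro i hi
    rw [Finset.mem_Ico] at hi
    have e : ∑ j ∈ Finset.Ico (0:ℤ) (L + N), p (i - j) * (if j < 0 then (0:ℝ) else 1)
       = _ := PP_eq hp (X := fun j => if j < 0 then (0:ℝ) else 1) (fun j hj => by simp [hj]) L hi.2
    have e2 : PP p N (fun j => if j < 0 then (0:ℝ) else 1) i = 1 := by
      refine Eq.trans ?_ hp.one
      apply Finset.sum_congr rfl
      intro k hk
      rw [Finset.mem_Icc] at hk
      have : ¬ (i - k < 0) := by omega
      simp [this]
    rw [e2] at e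
    rw [← e]
    apply le_of_eq
    apply Finset.sum_congr rfl
    intro j hj
    rw [Finset.mem_Ico] at hj
    simp [not_lt.2 hj.1]
  have h2 : ∑ i ∈ Finset.Ico (N:ℤ) L, ∑ j ∈ Finset.Ico (0:ℤ) (L + N), p (i - j) ≤
      ∑ i ∈ Finset.Ico (0:ℤ) (L + N), ∑ j ∈ Finset.Ico (0:ℤ) (L + N), p (i - j) := by
    apply Finset.sum_le_sum_of_subset_of_nonneg
    · intro i; simp only [Finset.mem_Ico]; omega
    · intro i _ _; exact Finset.sum_nonneg fun j _ => hp.nn _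
  refine le_trans ?_ (h1.trans h2)
  simp only [Finset.sum_const, Int.card_Ico, nsmul_eq_mul, mul_one]
  have : (L:ℤ) - N ≤ ((L:ℤ) - N).toNat := Int.self_le_toNat _
  exact_mod_cast this

section main
variable (hf hg : ℝ → ℝ) (p : ℤ → ℝ) (N : ℕ) (η a b : ℝ)

def En (L : ℕ) (F G : ℤ → ℝ) : ℝ :=
  (∑ i ∈ Finset.Ico (0:ℤ) (L + N), (Jp hf (F i) + η * F i))
  + (∑ i ∈ Finset.Ico (0:ℤ) (L + N), (Jp hg (G i) + η * G i))
  - ∑ i ∈ Finset.Ico (0:ℤ) (L + N), ∑ j ∈ Finset.Ico (0:ℤ) (L + N), F i * p (i - j) * G j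

def PT (u v : ℝ) : ℝ := Jp hg u + Jp hf v - u * v + η * (u + v)

def stp (L : ℕ) (s : (ℤ → ℝ) × (ℤ → ℝ)) : (ℤ → ℝ) × (ℤ → ℝ) :=
  (Upd hf p N η b L (Upd hg p N η a L s.1), Upd hg p N η a L s.1)

def s0 : (ℤ → ℝ) × (ℤ → ℝ) := (fun i => if i < 0 then 0 else b, fun i => if i < 0 then 0 else a)

structure Good (m : ℝ) (L : ℕ) (X : ℤ → ℝ) : Prop where
  mono : Monotone X
  mem : ∀ i, X i ∈ Icc 0 m
  neg : ∀ i < 0, X i = 0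
  top : ∀ i, (L:ℤ) ≤ i → X i = m

variable {hf hg p N η a b}

lemma good_init {m : ℝ} (hm : 0 ≤ m) (L : ℕ) : Good m L (fun i => if i < 0 then 0 else m) where
  mono := by
    intro i j hij
    dsimp only
    split_ifs
    · exact le_rfl
    · exact hm
    · omega
    · exact le_rfl
  mem := by
    intro i
    split_ifs
    · exact ⟨le_rfl, hm⟩
    · exact ⟨hm, le_rfl⟩
  neg := by intro i hi; simp [hi]
  top := by
    intro i hi
    have : ¬ i < 0 := by omega
    simp [this]

lemma good_upd {h : ℝ → ℝ} {m : ℝ} (hp : Wt p N) (hh : MemX h) (hm : m ∈ Icc (0:ℝ) 1) (L : ℕ)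
    {X : ℤ → ℝ} (hX : Monotone X) : Good m L (Upd h p N η m L X) where
  mono := Upd_mono_i hp hh hm L hX
  mem := fun i => Upd_mem hh hm L X i
  neg := fun _ hi => Upd_neg L X hi
  top := fun _ hi => Upd_top L X hi

lemma En_symm (hp : Wt p N) (L : ℕ) (F G : ℤ → ℝ) : En hf hg p N η L F G = En hg hf p N η L G F := by
  unfold En
  rw [Finset.sum_comm (f := fun i j => F i * p (i - j) * G j)]
  rw [add_comm]
  congr 1
  apply Finset.sum_congr rfl; intro i _
  apply Finset.sum_congr rfl; intro j _
  rw [← hp.ev, neg_sub]; ring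

lemma En_step (hp : Wt p N) (hhf : MemX hf) (hη : 0 ≤ η) (hb : b ∈ Icc (0:ℝ) 1)
    (ha : a ∈ Icc (0:ℝ) 1) (L : ℕ) {F G : ℤ → ℝ} (hF : Good b L F) (hG : Good a L G) :
    En hf hg p N η L (Upd hf p N η b L G) G ≤ En hf hg p N η L F G := by
  have := energy_step hp hhf hη hb L hG.neg (fun i => (hG.mem i).2.trans ha.2) hF.mem hF.top
  unfold En
  linarith

def EInv (hf hg : ℝ → ℝ) (p : ℤ → ℝ) (N : ℕ) (η a b : ℝ) (L : ℕ) (s : (ℤ → ℝ) × (ℤ → ℝ)) : Prop :=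
  Good b L s.1 ∧ Good a L s.2 ∧ En hf hg p N η L s.1 s.2 ≤ (L + N) * PT hf hg η a b + 2 * N

lemma Inv_init (hp : Wt p N) (ha : a ∈ Icc (0:ℝ) 1) (hb : b ∈ Icc (0:ℝ) 1) (L : ℕ) :
    EInv hf hg p N η a b L (s0 a b) := by
  refine ⟨good_init hb.1 L, good_init ha.1 L, ?_⟩
  have e1 : ∀ (h : ℝ → ℝ) (m : ℝ), ∑ i ∈ Finset.Ico (0:ℤ) (L + N),
      (Jp h (if i < 0 then 0 else m) + η * (if i < 0 then 0 else m))
      = (L + N) * (Jp h m + η * m) := by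
    intro h m
    rw [Finset.sum_congr rfl (g := fun _ => Jp h m + η * m)]
    · rw [Finset.sum_const, Int.card_Ico, nsmul_eq_mul]
      congr 1
      have : ((L:ℤ) + N - 0).toNat = L + N := by omega
      rw [this]; push_cast; rfl
    · intro i hi
      rw [Finset.mem_Ico] at hi
      simp [not_lt.2 hi.1]
  have e2 : ∑ i ∈ Finset.Ico (0:ℤ) (L + N), ∑ j ∈ Finset.Ico (0:ℤ) (L + N),
      (if i < 0 then 0 else b) * p (i - j) * (if j < 0 then 0 else a)
      = a * b * ∑ i ∈ Finset.Ico (0:ℤ) (L + N), ∑ j ∈ Finset.Ico (0:ℤ) (L + N), p (i - j) := by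
    simp only [Finset.mul_sum]
    apply Finset.sum_congr rfl; intro i hi
    apply Finset.sum_congr rfl; intro j hj
    rw [Finset.mem_Ico] at hi hj
    simp only [not_lt.2 hi.1, not_lt.2 hj.1, if_false]
    ring
  unfold En s0 PT
  dsimp only
  rw [e1, e1, e2]
  have h3 := dsum_ge hp L
  have hab : 0 ≤ a * b := mul_nonneg ha.1 hb.1
  have hab1 : a * b ≤ 1 := mul_le_one₀ ha.2 hb.1 hb.2
  have h4 := mul_le_mul_of_nonneg_left h3 hab
  have hN : (0:ℝ) ≤ N := Nat.cast_nonneg N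
  nlinarith

lemma Inv_step (hp : Wt p N) (hhf : MemX hf) (hhg : MemX hg) (hη : 0 ≤ η)
    (ha : a ∈ Icc (0:ℝ) 1) (hb : b ∈ Icc (0:ℝ) 1) (L : ℕ) (s : (ℤ → ℝ) × (ℤ → ℝ))
    (hs : EInv hf hg p N η a b L s) : EInv hf hg p N η a b L (stp hf hg p N η a b L s) := by
  obtain ⟨h1, h2, h3⟩ := hs
  have g1 : Good a L (Upd hg p N η a L s.1) := good_upd hp hhg ha L h1.mono
  have g2 : Good b L (Upd hf p N η b L (Upd hg p N η a L s.1)) := good_upd hp hhf hb L g1.mono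
  refine ⟨g2, g1, ?_⟩
  have k1 := En_step (hg := hg) hp hhf hη hb ha L h1 g1
  have k2 := En_step (hg := hf) hp hhg hη ha hb L h2 h1
  rw [En_symm hp, En_symm (hf := hg) hp] at k2
  exact (k1.trans k2).trans h3

lemma Inv_iter (hp : Wt p N) (hhf : MemX hf) (hhg : MemX hg) (hη : 0 ≤ η)
    (ha : a ∈ Icc (0:ℝ) 1) (hb : b ∈ Icc (0:ℝ) 1) (L n : ℕ) :
    EInv hf hg p N η a b L ((stp hf hg p N η a b L)^[n] (s0 a b)) := by
  induction n with
  | zero => exact Inv_init hp ha hb L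
  | succ n ih =>
    rw [Function.iterate_succ_apply']
    exact Inv_step hp hhf hhg hη ha hb L _ ih

lemma Inv_bound (hp : Wt p N)
    (ha : a ∈ Icc (0:ℝ) 1) (hb : b ∈ Icc (0:ℝ) 1)
    (hmin : ∀ u ∈ Icc (0:ℝ) 1, ∀ v ∈ Icc (0:ℝ) 1, PT hf hg η a b ≤ PT hf hg η u v)
    {ε δ : ℝ}
    (hδ : ∀ u ∈ Icc (0:ℝ) 1, ∀ v ∈ Icc (0:ℝ) 1, (u < 1 - ε ∨ v < 1 - ε) →
      PT hf hg η a b + δ ≤ PT hf hg η u v)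
    (L : ℕ) (hη : 0 ≤ η) (s : (ℤ → ℝ) × (ℤ → ℝ)) (hs : EInv hf hg p N η a b L s)
    (i : ℤ) (hi : 0 ≤ i) (hiL : i < L) (hbad : s.2 i < 1 - ε ∨ s.1 i < 1 - ε) :
    (i + 1) * δ ≤ 2 * N := by
  obtain ⟨h1, h2, h3⟩ := hs
  have hc := comono hp (Finset.Ico (0:ℤ) (L + N)) h1.mono h2.mono (fun i => (h1.mem i).1)
    (fun i => (h2.mem i).1)
  have m1 : ∀ j, s.1 j ∈ Icc (0:ℝ) 1 := fun j => ⟨(h1.mem j).1, (h1.mem j).2.trans hb.2⟩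
  have m2 : ∀ j, s.2 j ∈ Icc (0:ℝ) 1 := fun j => ⟨(h2.mem j).1, (h2.mem j).2.trans ha.2⟩
  have e1 : ∑ j ∈ Finset.Ico (0:ℤ) (L + N), (PT hf hg η (s.2 j) (s.1 j) - PT hf hg η a b) ≤ 2 * N := by
    have : ∑ j ∈ Finset.Ico (0:ℤ) (L + N), PT hf hg η (s.2 j) (s.1 j) ≤ En hf hg p N η L s.1 s.2 := by
      have e : ∑ j ∈ Finset.Ico (0:ℤ) (L + N), PT hf hg η (s.2 j) (s.1 j) =
        (∑ i ∈ Finset.Ico (0:ℤ) (L + N), (Jp hf (s.1 i) + η * s.1 i))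
        + (∑ i ∈ Finset.Ico (0:ℤ) (L + N), (Jp hg (s.2 i) + η * s.2 i))
        - ∑ i ∈ Finset.Ico (0:ℤ) (L + N), s.1 i * s.2 i := by
        rw [← Finset.sum_add_distrib, ← Finset.sum_sub_distrib]
        apply Finset.sum_congr rfl; intro j _
        unfold PT; ring
      rw [e]; unfold En; linarith
    rw [Finset.sum_sub_distrib, Finset.sum_const, Int.card_Ico, nsmul_eq_mul]
    have e : ((L:ℤ) + N - 0).toNat = L + N := by omega
    rw [e]; push_cast
    linarith
  have e2 : ∑ j ∈ Finset.Ico (0:ℤ) (i + 1), δ ≤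
      ∑ j ∈ Finset.Ico (0:ℤ) (i + 1), (PT hf hg η (s.2 j) (s.1 j) - PT hf hg η a b) := by
    apply Finset.sum_le_sum
    intro j hj
    rw [Finset.mem_Ico] at hj
    have hji : j ≤ i := by omega
    have := hδ (s.2 j) (m2 j) (s.1 j) (m1 j) (by
      rcases hbad with hb | hb
      · left; linarith [h2.mono hji]
      · right; linarith [h1.mono hji])
    linarith
  have e3 : ∑ j ∈ Finset.Ico (0:ℤ) (i + 1), (PT hf hg η (s.2 j) (s.1 j) - PT hf hg η a b) ≤
     ∑ j ∈ Finset.Ico (0:ℤ) (L + N), (PT hf hg η (s.2 j) (s.1 j) - PT hf hg η a b) := by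
    apply Finset.sum_le_sum_of_subset_of_nonneg
    · intro j; simp only [Finset.mem_Ico]; omega
    · intro j _ _
      linarith [hmin (s.2 j) (m2 j) (s.1 j) (m1 j)]
  rw [Finset.sum_const, Int.card_Ico, nsmul_eq_mul] at e2
  have e : (((i + 1 - 0).toNat : ℕ) : ℝ) = i + 1 := by
    have : ((i + 1 - 0).toNat : ℤ) = i + 1 := by omega
    exact_mod_cast this
  rw [e] at e2
  linarith

lemma stp_mono (hp : Wt p N) (hhf : MemX hf) (hhg : MemX hg) (L : ℕ) :
    Monotone (stp hf hg p N η a b L) := by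
  intro s t hst
  have := Upd_mono (η := η) (m := a) hp hhg L hst.1
  exact ⟨Upd_mono hp hhf L this, this⟩

lemma stp_anti (hp : Wt p N) (hhf : MemX hf) (hhg : MemX hg)
    (ha : a ∈ Icc (0:ℝ) 1) (hb : b ∈ Icc (0:ℝ) 1) {L L' : ℕ} (hL : L ≤ L') :
    stp hf hg p N η a b L' ≤ stp hf hg p N η a b L := by
  intro s
  have := Upd_anti (η := η) (p := p) (N := N) hhg ha hL s.1
  exact ⟨(Upd_mono hp hhf L' this).trans (Upd_anti hhf hb hL _), this⟩

lemma stp_s0 (hp : Wt p N) (hhf : MemX hf) (hhg : MemX hg)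
    (ha : a ∈ Icc (0:ℝ) 1) (hb : b ∈ Icc (0:ℝ) 1) (L : ℕ) :
    stp hf hg p N η a b L (s0 a b) ≤ s0 a b := by
  constructor
  · intro i
    by_cases hi : i < 0
    · simp [stp, s0, hi, Upd]
    · simp only [s0, hi, if_false]
      exact (Upd_mem hhf hb _ _ _).2
  · intro i
    by_cases hi : i < 0
    · simp [stp, s0, hi, Upd]
    · simp only [s0, hi, if_false]
      exact (Upd_mem hhg ha _ _ _).2

lemma PP_tendsto {X : ℕ → ℤ → ℝ} {Z : ℤ → ℝ} (h : ∀ i, Tendsto (fun n => X n i) atTop (nhds (Z i)))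
    (i : ℤ) : Tendsto (fun n => PP p N (X n) i) atTop (nhds (PP p N Z i)) :=
  tendsto_finsetSum _ fun k _ => (h (i - k)).const_mul (p k)

lemma discrete_main (hp : Wt p N) (hhf : MemX hf) (hhg : MemX hg) (hη : 0 < η)
    (ha : a ∈ Icc (0:ℝ) 1) (hb : b ∈ Icc (0:ℝ) 1)
    (hmin : ∀ u ∈ Icc (0:ℝ) 1, ∀ v ∈ Icc (0:ℝ) 1, PT hf hg η a b ≤ PT hf hg η u v)
    {ε δ : ℝ} (hδ0 : 0 < δ)
    (hδ : ∀ u ∈ Icc (0:ℝ) 1, ∀ v ∈ Icc (0:ℝ) 1, (u < 1 - ε ∨ v < 1 - ε) →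
      PT hf hg η a b + δ ≤ PT hf hg η u v) :
    ∃ X Y : ℤ → ℝ, Monotone X ∧ Monotone Y ∧ (∀ i, X i ∈ Icc (0:ℝ) 1) ∧ (∀ i, Y i ∈ Icc (0:ℝ) 1) ∧
      (∀ i < 0, X i = 0) ∧ (∀ i < 0, Y i = 0) ∧
      (∀ i, 0 ≤ i → X i ≤ he hf (PP p N Y i - η / 2)) ∧
      (∀ i, 0 ≤ i → Y i ≤ he hg (PP p N X i - η / 2)) ∧
      ∃ C : ℤ, ∀ i, C ≤ i → 1 - ε ≤ X i ∧ 1 - ε ≤ Y i := by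
  set st : ℕ → ℕ → (ℤ → ℝ) × (ℤ → ℝ) := fun L n => (stp hf hg p N η a b L)^[n] (s0 a b) with hst
  have hI : ∀ L n, EInv hf hg p N η a b L (st L n) := fun L n => Inv_iter hp hhf hhg hη.le ha hb L n
  have hant : ∀ L, Antitone (st L) := fun L =>
    (stp_mono hp hhf hhg L).antitone_iterate_of_map_le (stp_s0 hp hhf hhg ha hb L)
  have hantL : ∀ {L L' : ℕ} (n : ℕ), L ≤ L' → st L' n ≤ st L n := fun {L L'} n hL =>
    (stp_mono hp hhf hhg L').iterate_le_of_le (stp_anti hp hhf hhg ha hb hL) n (s0 a b)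
  have hd : Antitone (fun n => st n n) := fun n m hnm => (hant m hnm).trans (hantL n hnm)
  have hX0 : ∀ n i, (st n n).1 i ∈ Icc (0:ℝ) 1 := fun n i =>
    ⟨((hI n n).1.mem i).1, ((hI n n).1.mem i).2.trans hb.2⟩
  have hY0 : ∀ n i, (st n n).2 i ∈ Icc (0:ℝ) 1 := fun n i =>
    ⟨((hI n n).2.1.mem i).1, ((hI n n).2.1.mem i).2.trans ha.2⟩
  have tX : ∀ i, Tendsto (fun n => (st n n).1 i) atTop (nhds (⨅ n, (st n n).1 i)) := fun i =>
    tendsto_atTop_ciInf (fun n m hnm => (hd hnm).1 i) ⟨0, by rintro _ ⟨n, rfl⟩; exact (hX0 n i).1⟩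
  have tY : ∀ i, Tendsto (fun n => (st n n).2 i) atTop (nhds (⨅ n, (st n n).2 i)) := fun i =>
    tendsto_atTop_ciInf (fun n m hnm => (hd hnm).2 i) ⟨0, by rintro _ ⟨n, rfl⟩; exact (hY0 n i).1⟩
  set X : ℤ → ℝ := fun i => ⨅ n, (st n n).1 i with hX
  set Y : ℤ → ℝ := fun i => ⨅ n, (st n n).2 i with hY
  have lX : ∀ i n, X i ≤ (st n n).1 i := fun i n =>
    ciInf_le ⟨0, by rintro _ ⟨n, rfl⟩; exact (hX0 n i).1⟩ n
  have lY : ∀ i n, Y i ≤ (st n n).2 i := fun i n =>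
    ciInf_le ⟨0, by rintro _ ⟨n, rfl⟩; exact (hY0 n i).1⟩ n
  refine ⟨X, Y, ?_, ?_, ?_, ?_, ?_, ?_, ?_, ?_, ?_⟩
  · intro i j hij
    exact le_of_tendsto_of_tendsto' (tX i) (tX j) fun n => (hI n n).1.mono hij
  · intro i j hij
    exact le_of_tendsto_of_tendsto' (tY i) (tY j) fun n => (hI n n).2.1.mono hij
  · intro i
    exact isClosed_Icc.mem_of_tendsto (tX i) (Eventually.of_forall fun n => hX0 n i)
  · intro i
    exact isClosed_Icc.mem_of_tendsto (tY i) (Eventually.of_forall fun n => hY0 n i)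
  · intro i hi
    have h1 : ∀ n, (st n n).1 i = 0 := fun n => (hI n n).1.neg i hi
    simp [hX, h1]
  · intro i hi
    have h1 : ∀ n, (st n n).2 i = 0 := fun n => (hI n n).2.1.neg i hi
    simp [hY, h1]
  · intro i hi
    have h1 : ∀ᶠ n in atTop, PP p N (st n n).2 i < PP p N Y i + η / 2 :=
      (PP_tendsto (p := p) (N := N) tY i).eventually_lt_const (by linarith)
    obtain ⟨n, hn1, hn2⟩ := (h1.and (eventually_gt_atTop i.toNat)).exists
    have e : (st n (n+1)).1 i = min b (he hf (PP p N (st n (n+1)).2 i - η)) := by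
      simp only [hst]
      rw [Function.iterate_succ_apply']
      exact Upd_mid n _ hi (by omega)
    have l1 : X i ≤ (st n (n+1)).1 i :=
      (lX i (n+1)).trans ((hantL (n+1) (Nat.le_succ n)).1 i)
    have l2 : PP p N (st n (n+1)).2 i ≤ PP p N (st n n).2 i :=
      PP_mono hp ((hant n (Nat.le_succ n)).2) i
    rw [e] at l1
    exact (l1.trans (min_le_right _ _)).trans (he_mono hhf (by linarith))
  · intro i hi
    have h1 : ∀ᶠ n in atTop, PP p N (st n n).1 i < PP p N X i + η / 2 :=
      (PP_tendsto (p := p) (N := N) tX i).eventually_lt_const (by linarith)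
    obtain ⟨n, hn1, hn2⟩ := (h1.and (eventually_gt_atTop i.toNat)).exists
    have e : (st n (n+1)).2 i = min a (he hg (PP p N (st n n).1 i - η)) := by
      simp only [hst]
      rw [Function.iterate_succ_apply']
      exact Upd_mid n _ hi (by omega)
    have l1 : Y i ≤ (st n (n+1)).2 i :=
      (lY i (n+1)).trans ((hantL (n+1) (Nat.le_succ n)).2 i)
    rw [e] at l1
    exact (l1.trans (min_le_right _ _)).trans (he_mono hhg (by linarith))
  · refine ⟨max 0 ⌈2 * N / δ⌉, fun i hi => ?_⟩
    have hi0 : 0 ≤ i := (le_max_left _ _).trans hi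
    have hi1 : 2 * N / δ ≤ (i:ℝ) := (Int.le_ceil _).trans (by exact_mod_cast (le_max_right _ _).trans hi)
    have hi2 : 2 * N ≤ (i:ℝ) * δ := by rwa [div_le_iff₀ hδ0] at hi1
    have key : ∀ᶠ n : ℕ in atTop, 1 - ε ≤ (st n n).1 i ∧ 1 - ε ≤ (st n n).2 i := by
      filter_upwards [eventually_gt_atTop i.toNat] with n hn
      by_contra hcon
      have := Inv_bound hp ha hb hmin hδ n hη.le (st n n) (hI n n) i hi0 (by omega) (by
        by_contra h'; push Not at h'; exact hcon ⟨h'.2, h'.1⟩)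
      nlinarith
    exact ⟨ge_of_tendsto (tX i) (key.mono fun n h => h.1), ge_of_tendsto (tY i) (key.mono fun n h => h.2)⟩

end main

section cont
variable {ω : ℝ → ℝ}

lemma conv_eq (F ω : ℝ → ℝ) (x : ℝ) : conv F ω x = ∫ y, F (x - y) * ω y := by
  unfold conv
  rw [← integral_sub_left_eq_self (fun y => F y * ω (x - y)) volume x]
  simp

lemma conv_int (hω : IsAveragingKernel ω) {F : ℝ → ℝ} (hF : MemPsi F) (x : ℝ) :
    Integrable (fun y => F (x - y) * ω y) := by
  refine Integrable.bdd_mul (c := 1) hω.2.2.2.1 ?_ (Eventually.of_forall fun y => ?_)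
  · exact (hF.1.measurable.comp (measurable_const.sub measurable_id)).aestronglyMeasurable
  · rw [Real.norm_eq_abs, abs_of_nonneg (hF.2 _).1]; exact (hF.2 _).2

lemma conv_mem (hω : IsAveragingKernel ω) {F : ℝ → ℝ} (hF : MemPsi F) (x : ℝ) :
    conv F ω x ∈ Icc (0:ℝ) 1 := by
  rw [conv_eq]
  refine ⟨integral_nonneg fun y => mul_nonneg (hF.2 _).1 (hω.2.1 y), ?_⟩
  rw [← hω.2.2.2.2]
  exact integral_mono (conv_int hω hF x) hω.2.2.2.1 fun y =>
    mul_le_of_le_one_left (hω.2.1 y) (hF.2 _).2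

lemma conv_mono_x (hω : IsAveragingKernel ω) {F : ℝ → ℝ} (hF : MemPsi F) :
    Monotone (conv F ω) := by
  intro x x' hx
  rw [conv_eq, conv_eq]
  exact integral_mono (conv_int hω hF x) (conv_int hω hF x') fun y =>
    mul_le_mul_of_nonneg_right (hF.1 (by linarith)) (hω.2.1 y)

lemma conv_mono (hω : IsAveragingKernel ω) {F F' : ℝ → ℝ} (hF : MemPsi F) (hF' : MemPsi F')
    (h : ∀ x, F x ≤ F' x) (x : ℝ) : conv F ω x ≤ conv F' ω x := by
  rw [conv_eq, conv_eq]
  exact integral_mono (conv_int hω hF x) (conv_int hω hF' x) fun y =>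
    mul_le_mul_of_nonneg_right (h _) (hω.2.1 y)

lemma conv_tendsto (hω : IsAveragingKernel ω) {F : ℝ → ℝ} (hF : MemPsi F)
    (h : Tendsto F atBot (nhds 0)) : Tendsto (conv F ω) atBot (nhds 0) := by
  have e : conv F ω = fun x => ∫ y, F (x - y) * ω y := funext fun x => conv_eq F ω x
  rw [e]
  have h0 : (0:ℝ) = ∫ y, (0:ℝ) * ω y := by simp
  rw [h0]
  refine tendsto_integral_filter_of_dominated_convergence ω
    (Eventually.of_forall fun x => (conv_int hω hF x).aestronglyMeasurable)
    (Eventually.of_forall fun x => Eventually.of_forall fun y => ?_) hω.2.2.2.1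
    (Eventually.of_forall fun y => ?_)
  · rw [Real.norm_eq_abs, abs_of_nonneg (mul_nonneg (hF.2 _).1 (hω.2.1 y))]
    exact mul_le_of_le_one_left (hω.2.1 y) (hF.2 _).2
  · exact (h.comp (tendsto_atBot_add_const_right _ (-y) tendsto_id)).mul_const _

lemma hcomp_psi (hω : IsAveragingKernel ω) {h F : ℝ → ℝ} (hh : MemX h) (hF : MemPsi F) :
    MemPsi (fun x => h (conv F ω x)) :=
  ⟨fun x y hxy => hh.1 (conv_mem hω hF x) (conv_mem hω hF y) (conv_mono_x hω hF hxy),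
    fun x => hh.2 (conv_mem hω hF x)⟩

lemma sum_Icc_sym (φ : ℤ → ℝ) (N : ℕ) : ∑ k ∈ Finset.Icc (-(N:ℤ)) N, φ k
    = φ 0 + ∑ k ∈ Finset.range N, (φ (k + 1) + φ (-(k + 1))) := by
  induction N with
  | zero => simp
  | succ n ih =>
    have e : Finset.Icc (-((n+1:ℕ):ℤ)) ((n+1:ℕ):ℤ)
        = insert ((n:ℤ)+1) (insert (-((n:ℤ)+1)) (Finset.Icc (-(n:ℤ)) n)) := by
      ext k; simp only [Finset.mem_insert, Finset.mem_Icc]; push_cast; omega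
    rw [e, Finset.sum_insert, Finset.sum_insert, ih, Finset.sum_range_succ]
    · ring
    · simp only [Finset.mem_Icc]; omega
    · simp only [Finset.mem_insert, Finset.mem_Icc]; omega

def pw (p0 : ℝ) (q : ℕ → ℝ) (N : ℕ) (k : ℤ) : ℝ :=
  if k = 0 then p0 else if k.natAbs ≤ N then q (k.natAbs - 1) else 0

lemma pw_sum (p0 : ℝ) (q : ℕ → ℝ) (N : ℕ) (ψ : ℤ → ℝ) :
    ∑ k ∈ Finset.Icc (-(N:ℤ)) N, pw p0 q N k * ψ k
    = p0 * ψ 0 + ∑ k ∈ Finset.range N, q k * (ψ (k + 1) + ψ (-(k + 1))) := by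
  rw [sum_Icc_sym]
  have h00 : pw p0 q N 0 = p0 := by simp [pw]
  rw [h00]
  refine congrArg (fun t => p0 * ψ 0 + t) ?_
  · apply Finset.sum_congr rfl
    intro k hk
    rw [Finset.mem_range] at hk
    have a1 : pw p0 q N ((k:ℤ)+1) = q k := by
      have h1 : ((k:ℤ)+1) ≠ 0 := by omega
      have h2 : ((k:ℤ)+1).natAbs = k + 1 := by omega
      simp [pw, h1, h2, Nat.succ_le_of_lt hk]
    have a2 : pw p0 q N (-((k:ℤ)+1)) = q k := by
      have h1 : (-((k:ℤ)+1)) ≠ 0 := by omega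
      have h2 : (-((k:ℤ)+1)).natAbs = k + 1 := by omega
      simp only [pw, h1, h2, if_false, Nat.succ_le_of_lt hk, if_true]
      simp
    rw [a1, a2]; ring

lemma pw_wt {p0 : ℝ} {q : ℕ → ℝ} {N : ℕ} (h0 : 0 ≤ p0) (hq : ∀ k, 0 ≤ q k)
    (h1 : p0 + 2 * ∑ k ∈ Finset.range N, q k = 1) : Wt (pw p0 q N) N where
  nn k := by
    unfold pw; split_ifs
    · exact h0
    · exact hq _
    · exact le_rfl
  ev k := by simp [pw]
  sp k hk := by
    rw [Finset.mem_Icc] at hk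
    have h1 : k ≠ 0 := by omega
    have h2 : ¬ k.natAbs ≤ N := by omega
    simp [pw, h1, h2]
  one := by
    have := pw_sum p0 q N (fun _ => 1)
    simp only [mul_one] at this
    rw [← Finset.sum_mul] at this
    rw [this]
    linarith

lemma discretize (hω : IsAveragingKernel ω) {η : ℝ} (hη : 0 < η) :
    ∃ (Δ : ℝ) (N : ℕ) (p : ℤ → ℝ), 0 < Δ ∧ Wt p N ∧
      ∀ X : ℤ → ℝ, Monotone X → (∀ i, X i ∈ Icc (0:ℝ) 1) → ∀ x : ℝ,
        PP p N X ⌊x / Δ⌋ ≤ conv (fun y => X ⌊y / Δ⌋) ω x + η := by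
  have hev := hω.1
  have hnn := hω.2.1
  have hint := hω.2.2.2.1
  obtain ⟨B, hB0, hB⟩ : ∃ B : ℝ, 0 < B ∧ ∀ x, ω x ≤ B := by
    refine ⟨ω 0 + (eVariationOn ω univ).toReal + 1, ?_, fun x => ?_⟩
    · have := hnn 0
      have := ENNReal.toReal_nonneg (a := eVariationOn ω univ)
      linarith
    · have := hω.2.2.1.dist_le (mem_univ x) (mem_univ 0)
      rw [Real.dist_eq] at this
      linarith [le_abs_self (ω x - ω 0)]
  set Δ := η / (2 * B) with hΔ
  have hΔ0 : 0 < Δ := by positivity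
  have hBΔ : B * Δ = η / 2 := by rw [hΔ]; field_simp
  set q : ℕ → ℝ := fun k => ∫ y in ((k:ℕ):ℝ) * Δ..((k+1:ℕ):ℝ) * Δ, ω y with hq
  have hii : ∀ a b, IntervalIntegrable ω volume a b := fun a b => hint.intervalIntegrable
  have hle : ∀ k : ℕ, ((k:ℕ):ℝ) * Δ ≤ ((k+1:ℕ):ℝ) * Δ := fun k => by
    push_cast; nlinarith
  have hq0 : ∀ k, 0 ≤ q k := fun k =>
    intervalIntegral.integral_nonneg (hle k) fun y _ => hnn y
  have hqB : ∀ k, q k ≤ η / 2 := fun k => by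
    have h1 : q k ≤ ∫ y in ((k:ℕ):ℝ) * Δ..((k+1:ℕ):ℝ) * Δ, B :=
      intervalIntegral.integral_mono_on (hle k) (hii _ _) (by simp) fun y _ => hB y
    rw [intervalIntegral.integral_const, smul_eq_mul] at h1
    rw [← hBΔ]
    calc q k ≤ _ := h1
      _ = B * Δ := by push_cast; ring
  have hfold : ∀ (f : ℝ → ℝ) (N : ℕ), Integrable f →
      ∫ y in -((N:ℝ) * Δ)..(N:ℝ) * Δ, f y =
        ∑ k ∈ Finset.range N, ∫ y in ((k:ℕ):ℝ) * Δ..((k+1:ℕ):ℝ) * Δ, (f y + f (-y)) := by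
    intro f N hf
    have i1 : ∀ a b, IntervalIntegrable f volume a b := fun a b => hf.intervalIntegrable
    have i2 : ∀ a b, IntervalIntegrable (fun y => f (-y)) volume a b :=
      fun a b => hf.comp_neg.intervalIntegrable
    rw [intervalIntegral.sum_integral_adjacent_intervals (a := fun k : ℕ => (k:ℝ) * Δ)
      (fun k _ => (i1 _ _).add (i2 _ _)), intervalIntegral.integral_add (i1 _ _) (i2 _ _),
      intervalIntegral.integral_comp_neg]
    simp only [Nat.cast_zero, zero_mul, neg_zero]
    rw [add_comm, intervalIntegral.integral_add_adjacent_intervals (i1 _ _) (i1 _ _)]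
  have hlim : Tendsto (fun N : ℕ => ∫ y in -((N:ℝ) * Δ)..(N:ℝ) * Δ, ω y) atTop (nhds 1) := by
    rw [← hω.2.2.2.2]
    have t : Tendsto (fun N : ℕ => (N:ℝ) * Δ) atTop atTop :=
      tendsto_natCast_atTop_atTop.atTop_mul_const hΔ0
    exact intervalIntegral_tendsto_integral hint (tendsto_neg_atTop_atBot.comp t) t
  obtain ⟨N, hN⟩ := (hlim.eventually_const_lt (show 1 - η / 2 < 1 by linarith)).exists
  have hqs : ∫ y in -((N:ℝ) * Δ)..(N:ℝ) * Δ, ω y = 2 * ∑ k ∈ Finset.range N, q k := by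
    rw [hfold ω N hint, Finset.mul_sum]
    apply Finset.sum_congr rfl; intro k _
    simp only [hev, hq]
    rw [intervalIntegral.integral_add (hii _ _) (hii _ _)]; ring
  have hsym : ∀ f : ℝ → ℝ, Integrable f → (∀ y, 0 ≤ f y) →
      ∫ y in -((N:ℝ) * Δ)..(N:ℝ) * Δ, f y ≤ ∫ y, f y := by
    intro f hf h0
    rw [intervalIntegral.integral_of_le (by have : 0 ≤ (N:ℝ) * Δ := by positivity
                                            linarith)]
    exact setIntegral_le_integral hf (Eventually.of_forall h0)
  have hone := hsym ω hint hnn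
  rw [hω.2.2.2.2] at hone
  rw [hqs] at hN hone
  set p0 := 1 - 2 * ∑ k ∈ Finset.range N, q k with hp0
  refine ⟨Δ, N, pw p0 q N, hΔ0, pw_wt (by linarith) hq0 (by linarith), ?_⟩
  intro X hX hX1 x
  set j := ⌊x / Δ⌋ with hj
  have hF : MemPsi (fun y => X ⌊y / Δ⌋) := by
    refine ⟨fun y z hyz => hX (Int.floor_le_floor (div_le_div_of_nonneg_right hyz hΔ0.le)),
      fun y => hX1 _⟩
  have hci := conv_int hω hF x
  have c1 : ∑ k ∈ Finset.range N, q k * (X (j - (k+1)) + X (j + k)) ≤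
      conv (fun y => X ⌊y / Δ⌋) ω x := by
    rw [conv_eq]
    refine le_trans ?_ (hsym _ hci fun y => mul_nonneg (hX1 _).1 (hnn y))
    rw [hfold _ N hci]
    apply Finset.sum_le_sum
    intro k _
    have : q k * (X (j - (k+1)) + X (j + k)) =
        ∫ y in ((k:ℕ):ℝ) * Δ..((k+1:ℕ):ℝ) * Δ, ω y * (X (j - (k+1)) + X (j + k)) := by
      rw [intervalIntegral.integral_mul_const]
    rw [this]
    refine intervalIntegral.integral_mono_on (hle k) ((hii _ _).mul_const _)
      (hci.intervalIntegrable.add hci.comp_neg.intervalIntegrable) ?_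
    intro y hy
    have hy1 : (k:ℝ) ≤ y / Δ := by rw [le_div_iff₀ hΔ0]; exact hy.1
    have hy2 : y / Δ ≤ k + 1 := by
      rw [div_le_iff₀ hΔ0]; have := hy.2; push_cast at this; exact this
    have hj' : (j:ℝ) ≤ x / Δ := Int.floor_le _
    have f1 : X (j - (k+1)) ≤ X ⌊(x - y) / Δ⌋ := by
      apply hX; rw [Int.le_floor, sub_div]; push_cast; linarith
    have f2 : X (j + k) ≤ X ⌊(x - -y) / Δ⌋ := by
      apply hX; rw [Int.le_floor, sub_neg_eq_add, add_div]; push_cast; linarith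
    rw [hev]
    nlinarith [hnn y, mul_le_mul_of_nonneg_left f1 (hnn y), mul_le_mul_of_nonneg_left f2 (hnn y)]
  have c2 : PP (pw p0 q N) N X j = p0 * X j +
      ∑ k ∈ Finset.range N, q k * (X (j - (k+1)) + X (j + (k+1))) := by
    unfold PP
    rw [pw_sum p0 q N (fun k => X (j - k))]
    simp only [sub_zero, sub_neg_eq_add]
  have c3 : ∑ k ∈ Finset.range N, q k * (X (j - (k+1)) + X (j + (k+1))) -
      ∑ k ∈ Finset.range N, q k * (X (j - (k+1)) + X (j + k)) ≤ η / 2 := by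
    rw [← Finset.sum_sub_distrib]
    have s1 : ∑ k ∈ Finset.range N, (q k * (X (j - (k+1)) + X (j + (k+1))) -
        q k * (X (j - (k+1)) + X (j + k))) ≤
        ∑ k ∈ Finset.range N, η / 2 * (X (j + ((k+1:ℕ):ℤ)) - X (j + (k:ℤ))) := by
      apply Finset.sum_le_sum
      intro k _
      have : X (j + (k:ℤ)) ≤ X (j + ((k+1:ℕ):ℤ)) := hX (by push_cast; omega)
      push_cast at *
      nlinarith [hqB k]
    refine s1.trans ?_
    rw [← Finset.mul_sum, Finset.sum_range_sub (fun k : ℕ => X (j + (k:ℤ)))]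
    have := (hX1 (j + (N:ℤ))).2
    have := (hX1 (j + ((0:ℕ):ℤ))).1
    exact mul_le_of_le_one_right (half_pos hη).le (by linarith)
  have c4 : p0 * X j ≤ η / 2 := by
    have := hX1 j
    have : p0 * X j ≤ p0 := mul_le_of_le_one_right (by linarith) this.2
    linarith
  rw [c2]
  linarith

lemma subsol (hω : IsAveragingKernel ω) {hf hg : ℝ → ℝ} (hhf : MemX hf) (hhg : MemX hg)
    (hmin : ∀ u ∈ Icc (0:ℝ) 1, ∀ v ∈ Icc (0:ℝ) 1, ¬(u = 1 ∧ v = 1) →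
      Pot hf hg 1 1 < Pot hf hg u v) {ε : ℝ} (hε : 0 < ε) :
    ∃ F, MemPsi F ∧ (∀ x < 0, F x = 0) ∧
      (∀ x, 0 ≤ x → F x ≤ hf (conv (fun y => hg (conv F ω y)) ω x)) ∧
      ∃ C, ∀ x ≥ C, 1 - ε ≤ F x ∧ 1 - ε ≤ hg (conv F ω x) := by
  have hPot : ∀ u v, Pot hf hg u v = Jp hg u + Jp hf v - u * v := fun u v => rfl
  -- gap
  have hcont : Continuous (fun z : ℝ × ℝ => Pot hf hg z.1 z.2) := by
    simp only [hPot]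
    exact (((Jp_cont hg).comp continuous_fst).add ((Jp_cont hf).comp continuous_snd)).sub
      (continuous_fst.mul continuous_snd)
  obtain ⟨δ, hδ0, hδ⟩ : ∃ δ : ℝ, 0 < δ ∧ ∀ u ∈ Icc (0:ℝ) 1, ∀ v ∈ Icc (0:ℝ) 1,
      (u ≤ 1 - ε ∨ v ≤ 1 - ε) → Pot hf hg 1 1 + δ ≤ Pot hf hg u v := by
    set K : Set (ℝ × ℝ) := (Icc (0:ℝ) 1 ×ˢ Icc (0:ℝ) 1) ∩ {z | z.1 ≤ 1 - ε ∨ z.2 ≤ 1 - ε} with hK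
    have hKc : IsCompact K := (isCompact_Icc.prod isCompact_Icc).inter_right
      ((isClosed_le continuous_fst continuous_const).union
        (isClosed_le continuous_snd continuous_const))
    rcases K.eq_empty_or_nonempty with he | hne
    · refine ⟨1, one_pos, fun u hu v hv huv => ?_⟩
      have : (u, v) ∈ K := ⟨⟨hu, hv⟩, huv⟩
      rw [he] at this; exact this.elim
    · obtain ⟨z, hz, hzm⟩ := hKc.exists_isMinOn hne hcont.continuousOn
      have := hmin z.1 hz.1.1 z.2 hz.1.2 (by
        rintro ⟨h1, h2⟩
        rcases hz.2 with h | h <;> linarith)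
      refine ⟨Pot hf hg z.1 z.2 - Pot hf hg 1 1, by linarith, fun u hu v hv huv => ?_⟩
      have : Pot hf hg z.1 z.2 ≤ Pot hf hg u v := hzm (show (u, v) ∈ K from ⟨⟨hu, hv⟩, huv⟩)
      linarith
  set η := δ / 4 with hη
  have hη0 : 0 < η := by positivity
  have hPTc : Continuous (fun z : ℝ × ℝ => PT hf hg η z.1 z.2) := by
    have : (fun z : ℝ × ℝ => PT hf hg η z.1 z.2) =
        fun z => Pot hf hg z.1 z.2 + η * (z.1 + z.2) := rfl
    rw [this]
    exact hcont.add (continuous_const.mul (continuous_fst.add continuous_snd))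
  have hPT : ∀ u v, PT hf hg η u v = Pot hf hg u v + η * (u + v) := fun u v => rfl
  obtain ⟨⟨a, b⟩, hab, habm⟩ := (isCompact_Icc.prod isCompact_Icc :
    IsCompact (Icc (0:ℝ) 1 ×ˢ Icc (0:ℝ) 1)).exists_isMinOn ⟨(1, 1), by simp⟩ hPTc.continuousOn
  have hmin' : ∀ u ∈ Icc (0:ℝ) 1, ∀ v ∈ Icc (0:ℝ) 1, PT hf hg η a b ≤ PT hf hg η u v :=
    fun u hu v hv => habm (show (u, v) ∈ (Icc (0:ℝ) 1 ×ˢ Icc (0:ℝ) 1) from ⟨hu, hv⟩)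
  have h11 := hmin' 1 (by simp) 1 (by simp)
  obtain ⟨Δ, N, p, hΔ0, hp, hdis⟩ := discretize hω (half_pos hη0)
  obtain ⟨X, Y, hXm, hYm, hX1, hY1, hX0, hY0, hXle, hYle, C, hC⟩ :=
    discrete_main (ε := ε) (δ := δ / 2) hp hhf hhg hη0 hab.1 hab.2 hmin' (by positivity) (by
      intro u hu v hv huv
      have := hδ u hu v hv (huv.imp le_of_lt le_of_lt)
      have h2 : 0 ≤ η * (u + v) := mul_nonneg hη0.le (add_nonneg hu.1 hv.1)
      rw [hPT u v]
      rw [hPT 1 1] at h11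
      linarith)
  have psi : ∀ Z : ℤ → ℝ, Monotone Z → (∀ i, Z i ∈ Icc (0:ℝ) 1) →
      MemPsi (fun y => Z ⌊y / Δ⌋) := fun Z hZ hZ1 =>
    ⟨fun y z hyz => hZ (Int.floor_le_floor (div_le_div_of_nonneg_right hyz hΔ0.le)),
      fun y => hZ1 _⟩
  have hFp := psi X hXm hX1
  have hGp := psi Y hYm hY1
  have hneg : ∀ x : ℝ, x < 0 → ⌊x / Δ⌋ < 0 := fun x hx => by
    rw [Int.floor_lt]; push_cast; exact div_neg_of_neg_of_pos hx hΔ0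
  have hnn : ∀ x : ℝ, 0 ≤ x → 0 ≤ ⌊x / Δ⌋ := fun x hx => Int.floor_nonneg.2 (by positivity)
  have hGle : ∀ x, Y ⌊x / Δ⌋ ≤ hg (conv (fun y => X ⌊y / Δ⌋) ω x) := by
    intro x
    have hm := conv_mem hω hFp x
    rcases lt_or_ge x 0 with hx | hx
    · rw [hY0 _ (hneg x hx)]; exact (hhg.2 hm).1
    · refine (hYle _ (hnn x hx)).trans ?_
      rw [← he_eq hg hm]
      exact he_mono hhg (by linarith [hdis X hXm hX1 x])
  refine ⟨fun y => X ⌊y / Δ⌋, hFp, fun x hx => hX0 _ (hneg x hx), fun x hx => ?_, C * Δ, ?_⟩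
  · have hg' := hcomp_psi hω hhg hFp
    have hm := conv_mem hω hg' x
    refine (hXle _ (hnn x hx)).trans ?_
    rw [← he_eq hf hm]
    refine he_mono hhf ?_
    have := hdis Y hYm hY1 x
    have := conv_mono hω hGp hg' hGle x
    linarith
  · intro x hx
    have hCx : C ≤ ⌊x / Δ⌋ := by rw [Int.le_floor, le_div_iff₀ hΔ0]; exact hx
    exact ⟨(hC _ hCx).1, (hC _ hCx).2.trans (hGle x)⟩

end cont

/-- **Continuum terminated fixed point.** The hypothesis `rm hg 0 = 0` expresses the
continuity of `hg` at `0` (recall the convention `hg(0−) = 0`). -/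
theorem continuum_terminated_fixed_point
    (ω hf hg : ℝ → ℝ)
    (hω : IsAveragingKernel ω) (hreg : IsRegularKernel ω)
    (hhf : MemX hf) (hhg : MemX hg)
    (hgcont : rm hg 0 = 0)
    (hmin : ∀ u ∈ Icc (0:ℝ) 1, ∀ v ∈ Icc (0:ℝ) 1, ¬(u = 1 ∧ v = 1) →
      Pot hf hg 1 1 < Pot hf hg u v) :
    ∃ F G : ℝ → ℝ,
      MemPsi F ∧ MemPsi G ∧ Interpolates F 0 1 ∧ Interpolates G 0 1 ∧
      (∀ x < (0:ℝ), F x = 0) ∧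
      (∀ x > (0:ℝ), F x = hf (conv G ω x)) ∧
      (∀ x, G x = hg (conv F ω x)) := by
  classical
  set G : (ℝ → ℝ) → ℝ → ℝ := fun F y => hg (conv F ω y) with hG
  set T : (ℝ → ℝ) → ℝ → ℝ := fun F x => if x < 0 then 0 else hf (conv (G F) ω x) with hT
  have hGp : ∀ F, MemPsi F → MemPsi (G F) := fun F hF => hcomp_psi hω hhg hF
  have hTp : ∀ F, MemPsi F → MemPsi (T F) := by
    intro F hF
    have h1 := hcomp_psi hω hhf (hGp F hF)
    refine ⟨fun x y hxy => ?_, fun x => ?_⟩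
    · simp only [hT]
      split_ifs
      · exact le_rfl
      · exact (h1.2 y).1
      · linarith
      · exact h1.1 hxy
    · simp only [hT]
      split_ifs
      · simp
      · exact h1.2 x
  have hGmono : ∀ F F', MemPsi F → MemPsi F' → (∀ x, F x ≤ F' x) → ∀ x, G F x ≤ G F' x :=
    fun F F' hF hF' h x => hhg.1 (conv_mem hω hF x) (conv_mem hω hF' x) (conv_mono hω hF hF' h x)
  have hTmono : ∀ F F', MemPsi F → MemPsi F' → (∀ x, F x ≤ F' x) → ∀ x, T F x ≤ T F' x := by
    intro F F' hF hF' h x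
    simp only [hT]
    split_ifs
    · exact le_rfl
    · exact hhf.1 (conv_mem hω (hGp F hF) x) (conv_mem hω (hGp F' hF') x)
        (conv_mono hω (hGp F hF) (hGp F' hF') (hGmono F F' hF hF' h) x)
  set S : Set (ℝ → ℝ) := {F | MemPsi F ∧ ∀ x, F x ≤ T F x} with hS
  set Fs : ℝ → ℝ := fun x => sSup ((fun F : ℝ → ℝ => F x) '' S) with hFs
  have h0S : (fun _ => (0:ℝ)) ∈ S := by
    have h0 : MemPsi (fun _ => (0:ℝ)) := ⟨fun _ _ _ => le_rfl, fun _ => by simp⟩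
    exact ⟨h0, fun x => ((hTp _ h0).2 x).1⟩
  have hbdd : ∀ x, BddAbove ((fun F : ℝ → ℝ => F x) '' S) := fun x =>
    ⟨1, by rintro _ ⟨F, hF, rfl⟩; exact (hF.1.2 x).2⟩
  have hne : ∀ x, ((fun F : ℝ → ℝ => F x) '' S).Nonempty := fun x => ⟨_, _, h0S, rfl⟩
  have hle : ∀ F ∈ S, ∀ x, F x ≤ Fs x := fun F hF x => le_csSup (hbdd x) ⟨F, hF, rfl⟩
  have hFsp : MemPsi Fs := by
    refine ⟨fun x y hxy => ?_, fun x => ⟨hle _ h0S x, ?_⟩⟩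
    · apply csSup_le (hne x)
      rintro _ ⟨F, hF, rfl⟩
      exact (hF.1.1 hxy).trans (hle F hF y)
    · apply csSup_le (hne x)
      rintro _ ⟨F, hF, rfl⟩
      exact (hF.1.2 x).2
  have hpost : ∀ x, Fs x ≤ T Fs x := by
    intro x
    apply csSup_le (hne x)
    rintro _ ⟨F, hF, rfl⟩
    exact (hF.2 x).trans (hTmono F Fs hF.1 hFsp (hle F hF) x)
  have hTS : T Fs ∈ S := ⟨hTp _ hFsp, hTmono _ _ hFsp (hTp _ hFsp) hpost⟩
  have hfix : ∀ x, Fs x = T Fs x := fun x => le_antisymm (hpost x) (hle _ hTS x)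
  have hneg : ∀ x < (0:ℝ), Fs x = 0 := fun x hx => by rw [hfix]; simp [hT, hx]
  have hbig : ∀ ε > 0, ∃ C, ∀ x ≥ C, 1 - ε ≤ Fs x ∧ 1 - ε ≤ G Fs x := by
    intro ε hε
    obtain ⟨F, hFp, hF0, hFT, C, hC⟩ := subsol hω hhf hhg hmin hε
    have hFS : F ∈ S := by
      refine ⟨hFp, fun x => ?_⟩
      simp only [hT]
      split_ifs with hx
      · rw [hF0 x hx]
      · exact hFT x (not_lt.1 hx)
    exact ⟨C, fun x hx => ⟨(hC x hx).1.trans (hle F hFS x),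
      (hC x hx).2.trans (hGmono F Fs hFp hFsp (hle F hFS) x)⟩⟩
  have htop : ∀ H : ℝ → ℝ, MemPsi H → (∀ ε > 0, ∃ C, ∀ x ≥ C, 1 - ε ≤ H x) →
      Tendsto H atTop (nhds 1) := by
    intro H hH h
    rw [Metric.tendsto_atTop]
    intro ε hε
    obtain ⟨C, hC⟩ := h (ε / 2) (by positivity)
    refine ⟨C, fun x hx => ?_⟩
    rw [Real.dist_eq, abs_lt]
    have := hC x hx
    have := (hH.2 x).2
    constructor <;> linarith
  have hbot : Tendsto Fs atBot (nhds 0) := by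
    refine tendsto_const_nhds.congr' ?_
    filter_upwards [eventually_lt_atBot (0:ℝ)] with x hx
    rw [hneg x hx]
  have hGbot : Tendsto (G Fs) atBot (nhds 0) := by
    have hc := conv_tendsto hω hFsp hbot
    rw [tendsto_order]
    constructor
    · intro c hc'
      exact Eventually.of_forall fun x => lt_of_lt_of_le hc' ((hGp _ hFsp).2 x).1
    · intro c hc'
      have hr : sInf (hg '' Ioc 0 1) < c := by
        have : rm hg 0 = sInf (hg '' Ioc 0 1) := by simp [rm]
        rw [← this, hgcont]; exact hc'
      obtain ⟨_, ⟨u, hu, rfl⟩, huc⟩ := exists_lt_of_csInf_lt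
        ((nonempty_Ioc.2 one_pos).image hg) hr
      filter_upwards [hc.eventually_lt_const hu.1] with x hx
      exact lt_of_le_of_lt (hhg.1 (conv_mem hω hFsp x) ⟨hu.1.le, hu.2⟩ hx.le) huc
  refine ⟨Fs, G Fs, hFsp, hGp _ hFsp, ⟨hbot, htop Fs hFsp fun ε hε => ?_⟩,
    ⟨hGbot, htop _ (hGp _ hFsp) fun ε hε => ?_⟩, hneg, fun x hx => ?_, fun x => rfl⟩
  · obtain ⟨C, hC⟩ := hbig ε hε
    exact ⟨C, fun x hx => (hC x hx).1⟩
  · obtain ⟨C, hC⟩ := hbig ε hε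
    exact ⟨C, fun x hx => (hC x hx).2⟩
  · rw [hfix]
    simp [hT, not_lt.2 hx.le]
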